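/- Let C ⊆ ℝ be bounded from below and have zero lower box-counting dimension in the extended sense, i.e. dim_B^-(C ∩ [-a,a]) = 0 for every a > 0. Then for every integer d ≥ 1, the d-fold Minkowski sum C^{(d)} = C + ⋯ + C also satisfies dim_B^-(C^{(d)} ∩ [-a,a]) = 0 for every a > 0. -/

import Mathlib

/-!
Writing `N(ε; S)` for `coverN ε S`, the sum of two intervals of length `ε` is covered by two such
intervals, so `N(ε; S + ⋯ + S) ≤ (2 N(ε; S)) ^ d` at every single scale `ε`. The lower box dimension
is not subadditive, because the liminf may be attained along different scales for different
summands; here all the summands are equal, and for bounded `S` one obtains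
`dim (S + ⋯ + S) ≤ d * dim S`. Finally, if `C` is bounded below and a sum of `d` points of `C` lies
in `[-a, a]`, then each summand is also bounded above, so only a bounded part of `C` matters.
-/

open Set Filter

/-- `coverN ε S` is the minimal number of intervals of length `ε` needed to cover `S`. -/
noncomputable def coverN (ε : ℝ) (S : Set ℝ) : ℕ :=
  sInf {n : ℕ | ∃ f : Fin n → ℝ, S ⊆ ⋃ i, Icc (f i) (f i + ε)}

/-- The lower box-counting dimension of a set `S ⊆ ℝ`. -/
noncomputable def lowerBoxDim (S : Set ℝ) : ℝ :=
  liminf (fun ε : ℝ => Real.log (coverN ε S) / Real.log ε⁻¹) (nhdsWithin 0 (Ioi 0))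

/-- The `d`-fold Minkowski sum `C + C + ⋯ + C`. -/
def nFoldSum (d : ℕ) (C : Set ℝ) : Set ℝ :=
  {x | ∃ c : Fin d → ℝ, (∀ i, c i ∈ C) ∧ x = ∑ i, c i}

section

open Bornology Topology
open scoped Pointwise

variable {S T : Set ℝ} {ε : ℝ}

lemma coverN_le_card {ι : Type*} [Fintype ι] {f : ι → ℝ} (h : S ⊆ ⋃ i, Icc (f i) (f i + ε)) :
    coverN ε S ≤ Fintype.card ι := by
  refine Nat.sInf_le ⟨f ∘ (Fintype.equivFin ι).symm, h.trans_eq ?_⟩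
  exact ((Fintype.equivFin ι).symm.surjective.iUnion_comp fun i ↦ Icc (f i) (f i + ε)).symm

lemma Icc_subset_iUnion_Icc_add_mul (hε : 0 < ε) (x y : ℝ) :
    Icc x y ⊆ ⋃ k : Fin (⌊(y - x) / ε⌋₊ + 1), Icc (x + k * ε) (x + k * ε + ε) := by
  rintro z ⟨hxz, hzy⟩
  have hk : ⌊(z - x) / ε⌋₊ ≤ ⌊(y - x) / ε⌋₊ := by gcongr
  refine mem_iUnion.2 ⟨⟨⌊(z - x) / ε⌋₊, Nat.lt_succ_of_le hk⟩, ?_, ?_⟩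
  · have := (le_div_iff₀ hε).1 (Nat.floor_le (div_nonneg (sub_nonneg.2 hxz) hε.le))
    linarith
  · have := (div_lt_iff₀ hε).1 (Nat.lt_floor_add_one ((z - x) / ε))
    linarith

lemma coverN_le_floor_add_one (hε : 0 < ε) {x y : ℝ} (hS : S ⊆ Icc x y) :
    coverN ε S ≤ ⌊(y - x) / ε⌋₊ + 1 := by
  simpa only [Fintype.card_fin] using
    coverN_le_card (hS.trans (Icc_subset_iUnion_Icc_add_mul hε x y))

lemma exists_subset_iUnion_Icc_coverN (hε : 0 < ε) (hS : IsBounded S) :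
    ∃ f : Fin (coverN ε S) → ℝ, S ⊆ ⋃ i, Icc (f i) (f i + ε) :=
  Nat.sInf_mem (s := {n | ∃ f : Fin n → ℝ, S ⊆ ⋃ i, Icc (f i) (f i + ε)})
    ⟨_, _, hS.subset_Icc_sInf_sSup.trans (Icc_subset_iUnion_Icc_add_mul hε _ _)⟩

lemma coverN_mono (hε : 0 < ε) (hT : IsBounded T) (h : S ⊆ T) : coverN ε S ≤ coverN ε T := by
  obtain ⟨f, hf⟩ := exists_subset_iUnion_Icc_coverN hε hT
  simpa only [Fintype.card_fin] using coverN_le_card (h.trans hf)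

lemma coverN_add_le (hε : 0 < ε) (hS : IsBounded S) (hT : IsBounded T) :
    coverN ε (S + T) ≤ 2 * (coverN ε S * coverN ε T) := by
  obtain ⟨f, hf⟩ := exists_subset_iUnion_Icc_coverN hε hS
  obtain ⟨g, hg⟩ := exists_subset_iUnion_Icc_coverN hε hT
  have hcover : S + T ⊆ ⋃ p : Fin 2 × Fin (coverN ε S) × Fin (coverN ε T),
      Icc (f p.2.1 + g p.2.2 + p.1 * ε) (f p.2.1 + g p.2.2 + p.1 * ε + ε) := by
    rintro _ ⟨x, hx, y, hy, rfl⟩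
    obtain ⟨i, hi₁, hi₂⟩ := mem_iUnion.1 (hf hx)
    obtain ⟨j, hj₁, hj₂⟩ := mem_iUnion.1 (hg hy)
    rw [mem_iUnion]
    rcases le_total (x + y) (f i + g j + ε) with h | h
    · exact ⟨(0, i, j), by simpa using add_le_add hi₁ hj₁, by simpa using h⟩
    · refine ⟨(1, i, j), by simpa using h, ?_⟩
      simp only [Fin.val_one, Nat.cast_one, one_mul]
      linarith
  simpa only [Fintype.card_prod, Fintype.card_fin] using coverN_le_card hcover

lemma nFoldSum_zero (C : Set ℝ) : nFoldSum 0 C = {0} := by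
  ext x
  simp [nFoldSum]

lemma nFoldSum_succ (d : ℕ) (C : Set ℝ) : nFoldSum (d + 1) C = C + nFoldSum d C := by
  ext x
  rw [Set.mem_add]
  constructor
  · rintro ⟨c, hc, rfl⟩
    exact ⟨c 0, hc 0, _, ⟨Fin.tail c, fun i ↦ hc i.succ, rfl⟩, (Fin.sum_univ_succ c).symm⟩
  · rintro ⟨y, hy, _, ⟨c, hc, rfl⟩, rfl⟩
    exact ⟨Fin.cons y c, Fin.cases hy hc, (Fin.sum_cons y c).symm⟩

lemma isBounded_nFoldSum (hS : IsBounded S) (d : ℕ) : IsBounded (nFoldSum d S) := by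
  induction d with
  | zero => simpa only [nFoldSum_zero] using isBounded_singleton
  | succ d ih => simpa only [nFoldSum_succ] using hS.add ih

lemma coverN_nFoldSum_le (hε : 0 < ε) (hS : IsBounded S) (d : ℕ) :
    coverN ε (nFoldSum d S) ≤ (2 * coverN ε S) ^ d := by
  induction d with
  | zero =>
    have hcover : ({0} : Set ℝ) ⊆ ⋃ _ : Unit, Icc 0 (0 + ε) := by simpa using hε.le
    simpa only [nFoldSum_zero, pow_zero, Fintype.card_unit] using coverN_le_card hcover
  | succ d ih =>
    calc coverN ε (nFoldSum (d + 1) S)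
        ≤ 2 * (coverN ε S * coverN ε (nFoldSum d S)) := by
          simpa only [nFoldSum_succ] using coverN_add_le hε hS (isBounded_nFoldSum hS d)
      _ ≤ 2 * (coverN ε S * (2 * coverN ε S) ^ d) := by gcongr
      _ = (2 * coverN ε S) ^ (d + 1) := by ring

lemma exists_nFoldSum_inter_Iic_subset {C : Set ℝ} (hC : BddBelow C) (d : ℕ) (a : ℝ) :
    ∃ b, 0 < b ∧ nFoldSum d C ∩ Iic a ⊆ nFoldSum d (C ∩ Icc (-b) b) := by
  obtain ⟨l, hl⟩ := hC
  obtain ⟨b, hb, hlb⟩ := (Metric.isBounded_Icc l (l + (a - d * l))).subset_closedBall_lt 0 0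
  rw [Real.closedBall_eq_Icc, zero_sub, zero_add] at hlb
  refine ⟨b, hb, ?_⟩
  rintro _ ⟨⟨c, hc, rfl⟩, hca : ∑ i, c i ≤ a⟩
  refine ⟨c, fun i ↦ ⟨hc i, hlb ⟨hl (hc i), ?_⟩⟩, rfl⟩
  have hi : c i - l ≤ a - d * l :=
    calc c i - l ≤ ∑ j, (c j - l) :=
          Finset.single_le_sum (f := fun j ↦ c j - l) (fun j _ ↦ sub_nonneg.2 (hl (hc j)))
            (Finset.mem_univ i)
      _ = ∑ j, c j - d * l := by simp
      _ ≤ a - d * l := by gcongr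
  linarith

lemma monotone_log_natCast : Monotone fun n : ℕ ↦ Real.log n := by
  intro m n hmn
  rcases m.eq_zero_or_pos with rfl | hm
  · simpa using Real.log_natCast_nonneg n
  · exact Real.log_le_log (by exact_mod_cast hm) (by exact_mod_cast hmn)

lemma log_natCast_mul_le (m n : ℕ) :
    Real.log ((m * n : ℕ) : ℝ) ≤ Real.log m + Real.log n := by
  rcases eq_or_ne m 0 with rfl | hm
  · simpa using Real.log_natCast_nonneg n
  rcases eq_or_ne n 0 with rfl | hn
  · simpa using Real.log_natCast_nonneg m
  · rw [Nat.cast_mul, Real.log_mul (by exact_mod_cast hm) (by exact_mod_cast hn)]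

lemma log_inv_pos (hε : ε ∈ Ioo (0 : ℝ) 1) : 0 < Real.log ε⁻¹ :=
  Real.log_pos ((one_lt_inv₀ hε.1).2 hε.2)

/-- The exponent `s` such that `coverN ε S = ε ^ (-s)`; its lower limit as `ε ↓ 0` is the lower
box-counting dimension of `S`. For empty `S` it is `0`, since `Real.log 0 = 0`. -/
noncomputable def boxExponent (S : Set ℝ) (ε : ℝ) : ℝ :=
  Real.log (coverN ε S) / Real.log ε⁻¹

lemma boxExponent_mono (hε : ε ∈ Ioo (0 : ℝ) 1) (hT : IsBounded T) (h : S ⊆ T) :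
    boxExponent S ε ≤ boxExponent T ε :=
  div_le_div_of_nonneg_right (monotone_log_natCast (coverN_mono hε.1 hT h)) (log_inv_pos hε).le

lemma boxExponent_nFoldSum_le (hε : ε ∈ Ioo (0 : ℝ) 1) (hS : IsBounded S) (d : ℕ) :
    boxExponent (nFoldSum d S) ε ≤ d * (Real.log 2 / Real.log ε⁻¹ + boxExponent S ε) := by
  have hlog : Real.log (coverN ε (nFoldSum d S)) ≤ d * (Real.log 2 + Real.log (coverN ε S)) :=
    calc Real.log (coverN ε (nFoldSum d S))
        ≤ Real.log (((2 * coverN ε S) ^ d : ℕ) : ℝ) :=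
          monotone_log_natCast (coverN_nFoldSum_le hε.1 hS d)
      _ = d * Real.log ((2 * coverN ε S : ℕ) : ℝ) := by rw [Nat.cast_pow, Real.log_pow]
      _ ≤ d * (Real.log 2 + Real.log (coverN ε S)) := by
          gcongr
          exact log_natCast_mul_le 2 _
  rw [boxExponent, boxExponent, ← add_div, ← mul_div_assoc]
  exact div_le_div_of_nonneg_right hlog (log_inv_pos hε).le

lemma eventually_boxExponent_nonneg (S : Set ℝ) : ∀ᶠ ε in 𝓝[>] 0, 0 ≤ boxExponent S ε := by
  filter_upwards [Ioo_mem_nhdsGT one_pos] with ε hε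
  exact div_nonneg (Real.log_natCast_nonneg _) (log_inv_pos hε).le

lemma isBoundedUnder_ge_boxExponent (S : Set ℝ) :
    IsBoundedUnder (· ≥ ·) (𝓝[>] 0) (boxExponent S) :=
  isBoundedUnder_of_eventually_ge (eventually_boxExponent_nonneg S)

lemma eventually_coverN_le_inv_sq (hS : IsBounded S) :
    ∀ᶠ ε : ℝ in 𝓝[>] 0, (coverN ε S : ℝ) ≤ ε⁻¹ ^ 2 := by
  obtain ⟨r, hr, hSr⟩ := hS.subset_closedBall_lt 0 0
  rw [Real.closedBall_eq_Icc, zero_sub, zero_add] at hSr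
  filter_upwards [self_mem_nhdsWithin, tendsto_inv_nhdsGT_zero.eventually_ge_atTop (2 * r + 1)]
    with ε (hε : 0 < ε) hr_le
  have hN : (coverN ε S : ℝ) ≤ ⌊(r - -r) / ε⌋₊ + 1 := by
    exact_mod_cast coverN_le_floor_add_one hε hSr
  calc (coverN ε S : ℝ) ≤ ⌊(r - -r) / ε⌋₊ + 1 := hN
    _ ≤ (r - -r) / ε + 1 := by
        gcongr
        exact Nat.floor_le (div_nonneg (by linarith) hε.le)
    _ = 2 * r * ε⁻¹ + 1 := by ring
    _ ≤ 2 * r * ε⁻¹ + ε⁻¹ := by linarith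
    _ = (2 * r + 1) * ε⁻¹ := by ring
    _ ≤ ε⁻¹ ^ 2 := by
        rw [sq]
        gcongr

lemma isBoundedUnder_le_boxExponent (hS : IsBounded S) :
    IsBoundedUnder (· ≤ ·) (𝓝[>] 0) (boxExponent S) := by
  refine isBoundedUnder_of_eventually_le (a := 2) ?_
  filter_upwards [Ioo_mem_nhdsGT one_pos, eventually_coverN_le_inv_sq hS] with ε hε hN
  rw [boxExponent, div_le_iff₀ (log_inv_pos hε)]
  rcases (coverN ε S).eq_zero_or_pos with h | h
  · rw [h, Nat.cast_zero, Real.log_zero]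
    exact mul_nonneg zero_le_two (log_inv_pos hε).le
  · calc Real.log (coverN ε S) ≤ Real.log (ε⁻¹ ^ 2) :=
          Real.log_le_log (by exact_mod_cast h) hN
      _ = 2 * Real.log ε⁻¹ := by rw [Real.log_pow, Nat.cast_ofNat]

lemma tendsto_div_log_inv_nhdsGT_zero (c : ℝ) :
    Tendsto (fun ε : ℝ ↦ c / Real.log ε⁻¹) (𝓝[>] 0) (𝓝 0) :=
  (Real.tendsto_log_atTop.comp tendsto_inv_nhdsGT_zero).const_div_atTop c

lemma lowerBoxDim_nonneg (S : Set ℝ) : 0 ≤ lowerBoxDim S := by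
  rw [lowerBoxDim, liminf_eq]
  exact Real.sSup_nonneg' ⟨0, eventually_boxExponent_nonneg S, le_rfl⟩

lemma lowerBoxDim_mono (hT : IsBounded T) (h : S ⊆ T) : lowerBoxDim S ≤ lowerBoxDim T := by
  refine liminf_le_liminf ?_ (isBoundedUnder_ge_boxExponent S)
    (isBoundedUnder_le_boxExponent hT).isCoboundedUnder_ge
  filter_upwards [Ioo_mem_nhdsGT one_pos] with ε hε using boxExponent_mono hε hT h

lemma lowerBoxDim_nFoldSum_le (hS : IsBounded S) (d : ℕ) :
    lowerBoxDim (nFoldSum d S) ≤ d * lowerBoxDim S := by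
  set u : ℝ → ℝ := fun ε ↦ Real.log 2 / Real.log ε⁻¹
  have hu : Tendsto u (𝓝[>] 0) (𝓝 0) := tendsto_div_log_inv_nhdsGT_zero _
  have hS_ge := isBoundedUnder_ge_boxExponent S
  have hS_le := isBoundedUnder_le_boxExponent hS
  have hsum_ge : IsBoundedUnder (· ≥ ·) (𝓝[>] 0) (u + boxExponent S) :=
    isBoundedUnder_ge_add hu.isBoundedUnder_ge hS_ge
  have hsum_le : IsBoundedUnder (· ≤ ·) (𝓝[>] 0) (u + boxExponent S) :=
    isBoundedUnder_le_add hu.isBoundedUnder_le hS_le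
  have hmono : Monotone fun t : ℝ ↦ d * t := monotone_mul_left_of_nonneg d.cast_nonneg
  calc lowerBoxDim (nFoldSum d S)
      ≤ liminf ((fun t : ℝ ↦ d * t) ∘ (u + boxExponent S)) (𝓝[>] 0) := by
        refine liminf_le_liminf ?_ (isBoundedUnder_ge_boxExponent _)
          (hmono.isBoundedUnder_le_comp hsum_le).isCoboundedUnder_ge
        filter_upwards [Ioo_mem_nhdsGT one_pos] with ε hε using boxExponent_nFoldSum_le hε hS d
    _ = d * liminf (u + boxExponent S) (𝓝[>] 0) :=
        (hmono.map_liminf_of_continuousAt _ (by fun_prop) hsum_le.isCoboundedUnder_ge hsum_ge).symm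
    _ ≤ d * (limsup u (𝓝[>] 0) + liminf (boxExponent S) (𝓝[>] 0)) := by
        gcongr
        exact liminf_add_le hu.isBoundedUnder_ge hu.isBoundedUnder_le hS_ge
          hS_le.isCoboundedUnder_ge
    _ = d * lowerBoxDim S := by
        rw [hu.limsup_eq, zero_add]
        rfl

end

theorem stmt1 (C : Set ℝ) (hC : BddBelow C)
    (hdim : ∀ a : ℝ, 0 < a → lowerBoxDim (C ∩ Icc (-a) a) = 0) :
    ∀ d : ℕ, 1 ≤ d → ∀ a : ℝ, 0 < a →
      lowerBoxDim (nFoldSum d C ∩ Icc (-a) a) = 0 := by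
  intro d _ a _
  obtain ⟨b, hb, hsub⟩ := exists_nFoldSum_inter_Iic_subset hC d a
  have hbdd : Bornology.IsBounded (C ∩ Icc (-b) b) :=
    (Metric.isBounded_Icc (-b) b).subset inter_subset_right
  refine le_antisymm ?_ (lowerBoxDim_nonneg _)
  calc lowerBoxDim (nFoldSum d C ∩ Icc (-a) a)
      ≤ lowerBoxDim (nFoldSum d (C ∩ Icc (-b) b)) :=
        lowerBoxDim_mono (isBounded_nFoldSum hbdd d)
          ((inter_subset_inter_right _ Icc_subset_Iic_self).trans hsub)
    _ ≤ d * lowerBoxDim (C ∩ Icc (-b) b) := lowerBoxDim_nFoldSum_le hbdd d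
    _ = 0 := by rw [hdim b hb, mul_zero]
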